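/- Let a < b and let f, g : [a;b] → ℝ be regulated functions with no common points of discontinuity. Let (η_k)_{k≥0} and (θ_k)_{k≥0} be nonincreasing sequences of non-negative reals with η_k → 0 and θ_k → 0 as k → ∞. Set θ_{-1} := sup_{a≤t≤b} |g(b) − g(t)| and S̃ := Σ_{k=0}^{∞} 2^k · θ_{k−1} · TV^{η_k}(f,[a;b]) + Σ_{k=0}^{∞} 2^k · η_k · TV^{θ_k}(g,[a;b]). If S̃ < +∞, then the Riemann–Stieltjes integral ∫_a^b f dg exists and |∫_a^b f dg − f(a)·(g(b) − g(a))| ≤ S̃. -/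

import Mathlib

open Filter Set

/-- Truncated variation of `f` on `[a;b]` with truncation parameter `δ`. -/
noncomputable def truncVar (f : ℝ → ℝ) (δ a b : ℝ) : ENNReal :=
  ⨆ (n : ℕ) (t : Fin (n + 1) → ℝ) (_ : StrictMono t)
    (_ : ∀ i, t i ∈ Set.Icc a b),
    ∑ i : Fin n, ENNReal.ofReal (|f (t i.succ) - f (t i.castSucc)| - δ)

/-- p-variation of `f` on `[a;b]`. -/
noncomputable def pVar (f : ℝ → ℝ) (p a b : ℝ) : ENNReal :=
  ⨆ (n : ℕ) (t : Fin (n + 1) → ℝ) (_ : StrictMono t)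
    (_ : ∀ i, t i ∈ Set.Icc a b),
    ∑ i : Fin n, ENNReal.ofReal (|f (t i.succ) - f (t i.castSucc)| ^ p)

/-- The p-variation norm `(V^p(f,[a;b]))^{1/p}`. -/
noncomputable def pVarNorm (f : ℝ → ℝ) (p a b : ℝ) : ℝ :=
  (pVar f p a b).toReal ^ (1 / p)

/-- Oscillation norm `sup_{a ≤ s < t ≤ b} |f t - f s|`. -/
noncomputable def oscNorm (f : ℝ → ℝ) (a b : ℝ) : ℝ :=
  sSup {x | ∃ s ∈ Set.Icc a b, ∃ t ∈ Set.Icc a b, s < t ∧ x = |f t - f s|}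

/-- Sup norm `sup_{a ≤ t ≤ b} |f t|`. -/
noncomputable def supNorm (f : ℝ → ℝ) (a b : ℝ) : ℝ :=
  sSup {x | ∃ t ∈ Set.Icc a b, x = |f t|}

/-- `I` is the Riemann–Stieltjes integral `∫_a^b f dg`. -/
def RSIntegral (f g : ℝ → ℝ) (a b : ℝ) (I : ℝ) : Prop :=
  ∀ ε > (0 : ℝ), ∃ δ > (0 : ℝ), ∀ (n : ℕ) (t : Fin (n + 1) → ℝ) (ξ : Fin n → ℝ),
    StrictMono t → t 0 = a → t (Fin.last n) = b →
    (∀ i : Fin n, t i.castSucc ≤ ξ i ∧ ξ i ≤ t i.succ) →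
    (∀ i : Fin n, t i.succ - t i.castSucc < δ) →
    |∑ i : Fin n, f (ξ i) * (g (t i.succ) - g (t i.castSucc)) - I| < ε

/-- `f` is regulated on `[a;b]`: all the relevant one-sided limits exist and are finite. -/
def Regulated (f : ℝ → ℝ) (a b : ℝ) : Prop :=
  (∃ L : ℝ, Tendsto f (nhdsWithin a (Set.Ioi a)) (nhds L)) ∧
  (∃ L : ℝ, Tendsto f (nhdsWithin b (Set.Iio b)) (nhds L)) ∧
  ∀ x ∈ Set.Ioo a b,
    (∃ L : ℝ, Tendsto f (nhdsWithin x (Set.Iio x)) (nhds L)) ∧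
    (∃ L : ℝ, Tendsto f (nhdsWithin x (Set.Ioi x)) (nhds L))

/-- `f` and `g` have no common points of discontinuity on `[a;b]`. -/
def NoCommonDiscont (f g : ℝ → ℝ) (a b : ℝ) : Prop :=
  ∀ x ∈ Set.Icc a b,
    ContinuousWithinAt f (Set.Icc a b) x ∨ ContinuousWithinAt g (Set.Icc a b) x

/-- Chains of points with their truncated sums. -/
inductive Chn (f : ℝ → ℝ) (δ a b : ℝ) : ℝ → ℝ → Prop
  | base (s : ℝ) (hs : s ∈ Set.Icc a b) : Chn f δ a b s 0
  | step (s s' v : ℝ) (h : Chn f δ a b s v) (hlt : s < s') (hs : s' ∈ Set.Icc a b) :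
      Chn f δ a b s' (v + max (|f s' - f s| - δ) 0)

lemma Chn.ext {f : ℝ → ℝ} {δ a b s s' v : ℝ} (hδ : 0 ≤ δ) (h : Chn f δ a b s v) (hle : s ≤ s')
    (hs : s' ∈ Set.Icc a b) : Chn f δ a b s' (v + max (|f s' - f s| - δ) 0) := by
  rcases hle.lt_or_eq with h1 | h1
  · exact Chn.step s s' v h h1 hs
  · subst h1
    have : max (|f s - f s| - δ) 0 = 0 := by simp [hδ]
    rw [this, add_zero]; exact h

lemma Chn.exists_fin {f : ℝ → ℝ} {δ a b s v : ℝ} (h : Chn f δ a b s v) :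
    ∃ (n : ℕ) (t : Fin (n + 1) → ℝ), StrictMono t ∧ (∀ i, t i ∈ Set.Icc a b) ∧
      t (Fin.last n) = s ∧ 0 ≤ v ∧ ENNReal.ofReal v =
        ∑ i : Fin n, ENNReal.ofReal (|f (t i.succ) - f (t i.castSucc)| - δ) := by
  induction h with
  | base s hs =>
    refine ⟨0, fun _ => s, (by intro i j hij; exact absurd hij (by omega)), fun _ => hs, rfl, le_rfl, by simp⟩
  | step s s' v h hlt hs ih =>
    obtain ⟨n, t, ht, hm, hl, hv, hsum⟩ := ih
    refine ⟨n + 1, Fin.snoc (α := fun _ => ℝ) t s', ?_, ?_, by simp, by positivity, ?_⟩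
    · rw [Fin.strictMono_iff_lt_succ]
      intro i
      induction i using Fin.lastCases with
      | last => simp [Fin.succ_last, hl, hlt]
      | cast j =>
        rw [Fin.succ_castSucc, Fin.snoc_castSucc, Fin.snoc_castSucc]
        exact ht (Fin.castSucc_lt_succ)
    · intro i
      induction i using Fin.lastCases with
      | last => simpa using hs
      | cast j => simpa using hm j
    · rw [Fin.sum_univ_castSucc, ENNReal.ofReal_add hv (le_max_right _ _), hsum]
      congr 1
      · apply Finset.sum_congr rfl
        intro i _
        rw [Fin.succ_castSucc, Fin.snoc_castSucc, Fin.snoc_castSucc]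
      · rw [Fin.succ_last, Fin.snoc_last, Fin.snoc_castSucc, hl]
        rcases le_total (|f s' - f s| - δ) 0 with h0 | h0
        · rw [max_eq_right h0, ENNReal.ofReal_of_nonpos h0]; simp
        · rw [max_eq_left h0]

lemma Chn.le_truncVar {f : ℝ → ℝ} {δ a b s v : ℝ} (h : Chn f δ a b s v) :
    ENNReal.ofReal v ≤ truncVar f δ a b := by
  obtain ⟨n, t, ht, hm, hl, hv, hsum⟩ := h.exists_fin
  rw [hsum]
  unfold truncVar
  exact le_iSup_of_le n (le_iSup_of_le t (le_iSup_of_le ht (le_iSup_of_le hm le_rfl)))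

lemma decomp_aux (f : ℝ → ℝ) (δ a b : ℝ) (hδ : 0 ≤ δ) (s : ℕ → ℝ) (hs : Monotone s)
    (hm : ∀ i, s i ∈ Set.Icc a b) (i : ℕ) :
    ∃ m l h : ℝ, l ≤ h ∧ f (s i) - δ / 2 ≤ l ∧ h ≤ f (s i) + δ / 2 ∧
      (∃ v, Chn f δ a b (s i) v ∧ m ≤ v) ∧
      (∃ s' v, Chn f δ a b s' v ∧ s' ≤ s i ∧ m - δ / 2 - h ≤ v - f s' - δ) ∧
      (∃ s' v, Chn f δ a b s' v ∧ s' ≤ s i ∧ m + l - δ / 2 ≤ v + f s' - δ) ∧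
      ∀ z, l ≤ z → z ≤ h → ∃ u : ℕ → ℝ, u i = z ∧ (∀ j ≤ i, |f (s j) - u j| ≤ δ / 2) ∧
        ∑ j ∈ Finset.range i, |u (j + 1) - u j| ≤ m := by
  induction i with
  | zero =>
    refine ⟨0, f (s 0) - δ / 2, f (s 0) + δ / 2, by linarith, le_rfl, le_rfl,
      ⟨0, Chn.base _ (hm 0), le_rfl⟩, ⟨s 0, 0, Chn.base _ (hm 0), le_rfl, by linarith⟩,
      ⟨s 0, 0, Chn.base _ (hm 0), le_rfl, by linarith⟩, ?_⟩
    intro z h1 h2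
    refine ⟨fun _ => z, rfl, ?_, by simp⟩
    intro j hj
    obtain rfl : j = 0 := by omega
    rw [abs_le]; constructor <;> linarith
  | succ i ih =>
    obtain ⟨m, l, h, hlh, hl, hh, ⟨v0, hv0, hmv0⟩, ⟨s1, v1, hc1, hs1, hm1⟩,
      ⟨s2, v2, hc2, hs2, hm2⟩, hu⟩ := ih
    have hsi : s i ≤ s (i + 1) := hs (Nat.le_succ i)
    -- appending the new point
    have key : ∀ z w : ℝ, l ≤ w → w ≤ h → |f (s (i + 1)) - z| ≤ δ / 2 →
        ∃ u : ℕ → ℝ, u (i + 1) = z ∧ (∀ j ≤ i + 1, |f (s j) - u j| ≤ δ / 2) ∧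
        ∑ j ∈ Finset.range (i + 1), |u (j + 1) - u j| ≤ m + |z - w| := by
      intro z w hw1 hw2 hz
      obtain ⟨u, hui, hut, hus⟩ := hu w hw1 hw2
      refine ⟨fun j => if j ≤ i then u j else z, by simp, ?_, ?_⟩
      · intro j hj
        by_cases hji : j ≤ i
        · simp only [hji, if_true]; exact hut j hji
        · obtain rfl : j = i + 1 := by omega
          simpa using hz
      · rw [Finset.sum_range_succ]
        apply add_le_add
        · refine le_trans (le_of_eq (Finset.sum_congr rfl ?_)) hus
          intro j hj
          have := Finset.mem_range.1 hj
          have h1 : j + 1 ≤ i := by omega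
          have h2 : j ≤ i := by omega
          simp [h1, h2]
        · simp [hui]
    have e0 := hv0.ext hδ hsi (hm (i + 1))
    have e1 := hc1.ext hδ (hs1.trans hsi) (hm (i + 1))
    have e2 := hc2.ext hδ (hs2.trans hsi) (hm (i + 1))
    have g0 := le_max_right (|f (s (i + 1)) - f (s i)| - δ) 0
    have g1 := (sub_le_sub_right (le_abs_self (f (s (i + 1)) - f s1)) δ).trans
      (le_max_left (|f (s (i + 1)) - f s1| - δ) 0)
    have g2 := (sub_le_sub_right (neg_le_abs (f (s (i + 1)) - f s2)) δ).trans
      (le_max_left (|f (s (i + 1)) - f s2| - δ) 0)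
    set y := f (s (i + 1)) with hy
    by_cases hup : h < y - δ / 2
    · refine ⟨m + (y - δ / 2 - h), y - δ / 2, y - δ / 2, le_rfl, le_rfl, by linarith,
        ⟨_, e1, by linarith⟩, ⟨s1, v1, hc1, hs1.trans hsi, by linarith⟩,
        ⟨_, _, e1, le_rfl, by linarith⟩, ?_⟩
      intro z hz1 hz2
      obtain ⟨u, q1, q2, q3⟩ := key z h hlh le_rfl (by rw [abs_le]; constructor <;> linarith)
      refine ⟨u, q1, q2, q3.trans ?_⟩
      rw [abs_of_nonneg (by linarith)]; linarith
    by_cases hdn : y + δ / 2 < l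
    · refine ⟨m + (l - (y + δ / 2)), y + δ / 2, y + δ / 2, le_rfl, by linarith, le_rfl,
        ⟨_, e2, by linarith⟩, ⟨_, _, e2, le_rfl, by linarith⟩,
        ⟨s2, v2, hc2, hs2.trans hsi, by linarith⟩, ?_⟩
      intro z hz1 hz2
      obtain ⟨u, q1, q2, q3⟩ := key z l le_rfl hlh (by rw [abs_le]; constructor <;> linarith)
      refine ⟨u, q1, q2, q3.trans ?_⟩
      rw [abs_of_nonpos (by linarith)]; linarith
    push Not at hup hdn
    refine ⟨m, max l (y - δ / 2), min h (y + δ / 2), ?_, le_max_right _ _, min_le_right _ _,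
      ⟨_, e0, by linarith⟩, ?_, ?_, ?_⟩
    · exact max_le (le_min hlh hdn) (le_min hup (by linarith))
    · rcases le_total h (y + δ / 2) with hc | hc
      · rw [min_eq_left hc]
        exact ⟨s1, v1, hc1, hs1.trans hsi, hm1⟩
      · rw [min_eq_right hc]
        exact ⟨_, _, e0, le_rfl, by linarith⟩
    · rcases le_total l (y - δ / 2) with hc | hc
      · rw [max_eq_right hc]
        exact ⟨_, _, e0, le_rfl, by linarith⟩
      · rw [max_eq_left hc]
        exact ⟨s2, v2, hc2, hs2.trans hsi, hm2⟩
    · intro z hz1 hz2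
      have a1 := (le_max_left _ _).trans hz1
      have a2 := (le_max_right _ _).trans hz1
      have a3 := hz2.trans (min_le_left _ _)
      have a4 := hz2.trans (min_le_right _ _)
      obtain ⟨u, q1, q2, q3⟩ := key z z a1 a3 (by rw [abs_le]; constructor <;> linarith)
      exact ⟨u, q1, q2, by simpa using q3⟩

lemma decomp (f : ℝ → ℝ) (δ a b : ℝ) (hδ : 0 ≤ δ) (s : ℕ → ℝ) (hs : Monotone s)
    (hm : ∀ i, s i ∈ Set.Icc a b) (n : ℕ) :
    ∃ u : ℕ → ℝ, (∀ j ≤ n, |f (s j) - u j| ≤ δ / 2) ∧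
      ENNReal.ofReal (∑ j ∈ Finset.range n, |u (j + 1) - u j|) ≤ truncVar f δ a b := by
  obtain ⟨m, l, h, hlh, -, -, ⟨v, hv, hmv⟩, -, -, hu⟩ := decomp_aux f δ a b hδ s hs hm n
  obtain ⟨u, -, h1, h2⟩ := hu l le_rfl hlh
  exact ⟨u, h1, (ENNReal.ofReal_le_ofReal (h2.trans hmv)).trans hv.le_truncVar⟩

lemma truncVar_anti (f : ℝ → ℝ) {δ δ' : ℝ} (a b : ℝ) (h : δ ≤ δ') :
    truncVar f δ' a b ≤ truncVar f δ a b := by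
  unfold truncVar
  gcongr

/-- Discrete Riemann sum. -/
noncomputable def DD (n : ℕ) (v q : ℕ → ℝ) : ℝ :=
  ∑ i ∈ Finset.range n, (v (i + 1) - v 0) * (q (i + 1) - q i)

lemma DD_parts (n : ℕ) (v q : ℕ → ℝ) :
    DD n v q = ∑ i ∈ Finset.range n, (v (i + 1) - v i) * (q n - q i) := by
  unfold DD
  induction n with
  | zero => simp
  | succ n ih =>
    rw [Finset.sum_range_succ, ih, Finset.sum_range_succ]
    have : ∑ i ∈ Finset.range n, (v (i + 1) - v i) * (q (n + 1) - q i)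
        = ∑ i ∈ Finset.range n, (v (i + 1) - v i) * (q n - q i)
          + (v n - v 0) * (q (n + 1) - q n) := by
      rw [← Finset.sum_range_sub v n, Finset.sum_mul, ← Finset.sum_add_distrib]
      apply Finset.sum_congr rfl
      intro i _; ring
    rw [this]; ring

lemma DD_add_left (n : ℕ) (v w q : ℕ → ℝ) : DD n (v + w) q = DD n v q + DD n w q := by
  unfold DD
  rw [← Finset.sum_add_distrib]
  apply Finset.sum_congr rfl
  intro i _; simp only [Pi.add_apply]; ring

lemma DD_add_right (n : ℕ) (v p q : ℕ → ℝ) : DD n v (p + q) = DD n v p + DD n v q := by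
  unfold DD
  rw [← Finset.sum_add_distrib]
  apply Finset.sum_congr rfl
  intro i _; simp only [Pi.add_apply]; ring

lemma DD_le_left (n : ℕ) (w q : ℕ → ℝ) (Θ : ℝ) (hq : ∀ i < n, |q n - q i| ≤ Θ) :
    |DD n w q| ≤ Θ * ∑ i ∈ Finset.range n, |w (i + 1) - w i| := by
  rw [DD_parts, Finset.mul_sum]
  refine (Finset.abs_sum_le_sum_abs _ _).trans (Finset.sum_le_sum ?_)
  intro i hi
  rw [abs_mul, mul_comm]
  exact mul_le_mul_of_nonneg_right (hq i (Finset.mem_range.1 hi)) (abs_nonneg _)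

lemma DD_le_right (n : ℕ) (v p : ℕ → ℝ) (H : ℝ) (hv : ∀ i ≤ n, |v i - v 0| ≤ H) :
    |DD n v p| ≤ H * ∑ i ∈ Finset.range n, |p (i + 1) - p i| := by
  unfold DD
  rw [Finset.mul_sum]
  refine (Finset.abs_sum_le_sum_abs _ _).trans (Finset.sum_le_sum ?_)
  intro i hi
  rw [abs_mul]
  exact mul_le_mul_of_nonneg_right (hv _ (Finset.mem_range.1 hi)) (abs_nonneg _)


lemma ofReal_mul_add_le (θ A A' : ℝ) (hθ : 0 ≤ θ) (X : ENNReal) (k : ℕ)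
    (h1 : ENNReal.ofReal A ≤ X) (h2 : ENNReal.ofReal A' ≤ X) :
    ENNReal.ofReal (θ * (A + A')) ≤ ENNReal.ofReal ((2 : ℝ) ^ (k + 1) * θ) * X := by
  rw [ENNReal.ofReal_mul hθ]
  calc ENNReal.ofReal θ * ENNReal.ofReal (A + A')
      ≤ ENNReal.ofReal θ * (X + X) := by
        gcongr
        exact ENNReal.ofReal_add_le.trans (add_le_add h1 h2)
    _ = ENNReal.ofReal (2 * θ) * X := by
        rw [ENNReal.ofReal_mul (by norm_num)]
        simp only [ENNReal.ofReal_ofNat]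
        ring
    _ ≤ _ := by
        gcongr
        have : (1 : ℝ) ≤ 2 ^ k := one_le_pow₀ (by norm_num)
        rw [pow_succ]; linarith

/-- terms of the series -/
noncomputable def trm (η Θ : ℕ → ℝ) (X Y : ℕ → ENNReal) (k : ℕ) : ENNReal :=
  ENNReal.ofReal ((2 : ℝ) ^ k * Θ k) * X k + ENNReal.ofReal ((2 : ℝ) ^ k * η k) * Y k

lemma abs_osc {x u : ℕ → ℝ} {n : ℕ} {δ : ℝ} (h : ∀ j ≤ n, |x j - u j| ≤ δ / 2) (i j : ℕ)
    (hi : i ≤ n) (hj : j ≤ n) : |(x - u) i - (x - u) j| ≤ δ := by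
  have h1 := abs_le.1 (h i hi)
  have h2 := abs_le.1 (h j hj)
  simp only [Pi.sub_apply]
  rw [abs_le]; constructor <;> linarith [h1.1, h1.2, h2.1, h2.2]

lemma sum_abs_sub_le (n : ℕ) (u w : ℕ → ℝ) :
    ∑ j ∈ Finset.range n, |(u - w) (j + 1) - (u - w) j| ≤
      ∑ j ∈ Finset.range n, |u (j + 1) - u j| + ∑ j ∈ Finset.range n, |w (j + 1) - w j| := by
  rw [← Finset.sum_add_distrib]
  apply Finset.sum_le_sum
  intro i _
  simp only [Pi.sub_apply]
  have : u (i + 1) - w (i + 1) - (u i - w i) = (u (i + 1) - u i) - (w (i + 1) - w i) := by ring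
  rw [this]; exact abs_sub _ _

section core
variable {n : ℕ} {x y : ℕ → ℝ} {u p : ℕ → ℕ → ℝ} {η θ Θ : ℕ → ℝ} {X Y : ℕ → ENNReal}

lemma F_step (hη : ∀ k, 0 ≤ η k) (hθ : ∀ k, 0 ≤ θ k) (hΘ : ∀ k, Θ (k + 1) = θ k)
    (hX : Monotone X) (hY : Monotone Y)
    (hu : ∀ k, ∀ j ≤ n, |x j - u k j| ≤ η k / 2)
    (hA : ∀ k, ENNReal.ofReal (∑ j ∈ Finset.range n, |u k (j + 1) - u k j|) ≤ X k)
    (hp : ∀ k, ∀ j ≤ n, |y j - p k j| ≤ θ k / 2)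
    (hB : ∀ k, ENNReal.ofReal (∑ j ∈ Finset.range n, |p k (j + 1) - p k j|) ≤ Y k) (k : ℕ) :
    ENNReal.ofReal |DD n (x - u k) (y - p k)| ≤
      ENNReal.ofReal |DD n (x - u (k + 1)) (y - p (k + 1))| + trm η Θ X Y (k + 1) := by
  have e1 : DD n (x - u k) (y - p k) = DD n (x - u (k + 1)) (y - p (k + 1)) +
      DD n (u (k + 1) - u k) (y - p k) + DD n (x - u (k + 1)) (p (k + 1) - p k) := by
    have a1 : x - u k = (x - u (k + 1)) + (u (k + 1) - u k) := by abel
    have a2 : y - p k = (y - p (k + 1)) + (p (k + 1) - p k) := by abel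
    rw [a1, DD_add_left]
    conv_lhs => rw [a2, DD_add_right]
    conv_rhs => rw [a2]
    rw [← a2]
    ring
  have b1 := DD_le_left n (u (k + 1) - u k) (y - p k) (θ k)
    (fun i hi => abs_osc (hp k) n i le_rfl hi.le)
  have b2 := DD_le_right n (x - u (k + 1)) (p (k + 1) - p k) (η (k + 1))
    (fun i hi => abs_osc (hu (k + 1)) i 0 hi (Nat.zero_le _))
  have c1 := b1.trans (mul_le_mul_of_nonneg_left (sum_abs_sub_le n (u (k + 1)) (u k)) (hθ k))
  have c2 := b2.trans (mul_le_mul_of_nonneg_left (sum_abs_sub_le n (p (k + 1)) (p k)) (hη (k + 1)))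
  rw [e1]
  refine (ENNReal.ofReal_le_ofReal ((abs_add_three _ _ _))).trans ?_
  rw [add_assoc]
  refine ENNReal.ofReal_add_le.trans (add_le_add_right (ENNReal.ofReal_add_le.trans ?_) _)
  unfold trm
  refine add_le_add ?_ ?_
  · rw [hΘ]
    exact (ENNReal.ofReal_le_ofReal c1).trans (ofReal_mul_add_le _ _ _ (hθ k) _ _ (hA _)
      ((hA _).trans (hX (Nat.le_succ _))))
  · exact (ENNReal.ofReal_le_ofReal c2).trans (ofReal_mul_add_le _ _ _ (hη _) _ _ (hB _)
      ((hB _).trans (hY (Nat.le_succ _))))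

lemma F_bound (hη : ∀ k, 0 ≤ η k) (hθ : ∀ k, 0 ≤ θ k) (hΘ : ∀ k, Θ (k + 1) = θ k)
    (hηl : Tendsto η atTop (nhds 0)) (hθl : Tendsto θ atTop (nhds 0))
    (hX : Monotone X) (hY : Monotone Y)
    (hu : ∀ k, ∀ j ≤ n, |x j - u k j| ≤ η k / 2)
    (hA : ∀ k, ENNReal.ofReal (∑ j ∈ Finset.range n, |u k (j + 1) - u k j|) ≤ X k)
    (hp : ∀ k, ∀ j ≤ n, |y j - p k j| ≤ θ k / 2)
    (hB : ∀ k, ENNReal.ofReal (∑ j ∈ Finset.range n, |p k (j + 1) - p k j|) ≤ Y k) (k : ℕ) :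
    ENNReal.ofReal |DD n (x - u k) (y - p k)| ≤ ∑' j, trm η Θ X Y (j + (k + 1)) := by
  have hN : ∀ N : ℕ, ENNReal.ofReal |DD n (x - u k) (y - p k)| ≤
      (∑ j ∈ Finset.range N, trm η Θ X Y (j + (k + 1))) +
        ENNReal.ofReal |DD n (x - u (N + k)) (y - p (N + k))| := by
    intro N
    induction N with
    | zero => simp
    | succ N ih =>
      refine ih.trans ?_
      rw [Finset.sum_range_succ, add_assoc]
      refine add_le_add_right ?_ _
      have := F_step hη hθ hΘ hX hY hu hA hp hB (N + k)
      have e : N + 1 + k = N + k + 1 := by ring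
      refine this.trans_eq ?_
      rw [e, ← add_assoc N k 1]
      exact add_comm _ _
  have hz : Tendsto (fun N : ℕ => ENNReal.ofReal |DD n (x - u (N + k)) (y - p (N + k))|) atTop
      (nhds 0) := by
    have h0 : Tendsto (fun N : ℕ => ENNReal.ofReal (η (N + k) * (n * θ (N + k)))) atTop
        (nhds 0) := by
      have h1 : Tendsto (fun N : ℕ => η (N + k) * (n * θ (N + k))) atTop (nhds 0) := by
        have a1 := hηl.comp (tendsto_add_atTop_nat k)
        have a2 := hθl.comp (tendsto_add_atTop_nat k)
        simpa using a1.mul (a2.const_mul (n : ℝ))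
      simpa using ENNReal.tendsto_ofReal h1
    refine tendsto_of_tendsto_of_tendsto_of_le_of_le tendsto_const_nhds h0 (fun _ => zero_le) ?_
    intro N
    apply ENNReal.ofReal_le_ofReal
    refine (DD_le_right n (x - u (N + k)) (y - p (N + k)) (η (N + k))
      (fun i hi => abs_osc (hu (N + k)) i 0 hi (Nat.zero_le _))).trans ?_
    refine mul_le_mul_of_nonneg_left ?_ (hη _)
    refine (Finset.sum_le_card_nsmul _ _ (θ (N + k)) ?_).trans (by simp)
    intro i hi
    have := Finset.mem_range.1 hi
    exact abs_osc (hp (N + k)) _ _ this this.le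
  have hlim : Tendsto (fun N : ℕ => (∑' j, trm η Θ X Y (j + (k + 1))) +
        ENNReal.ofReal |DD n (x - u (N + k)) (y - p (N + k))|) atTop
        (nhds ((∑' j, trm η Θ X Y (j + (k + 1))) + 0)) := tendsto_const_nhds.add hz
  rw [add_zero] at hlim
  refine ge_of_tendsto' hlim (fun N => (hN N).trans ?_)
  gcongr
  exact ENNReal.sum_le_tsum _

lemma tsum_trm_succ (c : ℕ → ENNReal) (k : ℕ) :
    ∑' j, c (j + k) = c k + ∑' j, c (j + (k + 1)) := by
  have h := tsum_eq_zero_add' (f := fun j => c (j + k)) ENNReal.summable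
  rw [h]
  simp only [zero_add]
  congr 1
  apply tsum_congr
  intro j
  congr 1
  ring

lemma E_bound (hη : ∀ k, 0 ≤ η k) (hθ : ∀ k, 0 ≤ θ k) (hΘ : ∀ k, Θ (k + 1) = θ k)
    (hηl : Tendsto η atTop (nhds 0)) (hθl : Tendsto θ atTop (nhds 0))
    (hX : Monotone X) (hY : Monotone Y)
    (hu : ∀ k, ∀ j ≤ n, |x j - u k j| ≤ η k / 2)
    (hA : ∀ k, ENNReal.ofReal (∑ j ∈ Finset.range n, |u k (j + 1) - u k j|) ≤ X k)
    (hp : ∀ k, ∀ j ≤ n, |y j - p k j| ≤ θ k / 2)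
    (hB : ∀ k, ENNReal.ofReal (∑ j ∈ Finset.range n, |p k (j + 1) - p k j|) ≤ Y k) (k : ℕ) :
    ENNReal.ofReal |DD n (x - u k) y| ≤ ENNReal.ofReal ((2 : ℝ) ^ k * η k) * Y k +
      ∑' j, trm η Θ X Y (j + (k + 1)) := by
  have hF := F_bound hη hθ hΘ hηl hθl hX hY hu hA hp hB k
  have e : DD n (x - u k) y = DD n (x - u k) (p k) + DD n (x - u k) (y - p k) := by
    rw [← DD_add_right]; congr 1; abel
  rw [e]
  refine (ENNReal.ofReal_le_ofReal (abs_add_le _ _)).trans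
    (ENNReal.ofReal_add_le.trans (add_le_add ?_ hF))
  have b2 := DD_le_right n (x - u k) (p k) (η k)
    (fun i hi => abs_osc (hu k) i 0 hi (Nat.zero_le _))
  refine (ENNReal.ofReal_le_ofReal b2).trans ?_
  rw [ENNReal.ofReal_mul (hη k)]
  gcongr
  · have : (1 : ℝ) ≤ 2 ^ k := one_le_pow₀ (by norm_num)
    nlinarith [hη k]
  · exact hB k

lemma G_bound (hη : ∀ k, 0 ≤ η k) (hθ : ∀ k, 0 ≤ θ k) (hΘ : ∀ k, Θ (k + 1) = θ k)
    (hΘ0 : 0 ≤ Θ 0) (hy : ∀ i < n, |y n - y i| ≤ Θ 0)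
    (hηl : Tendsto η atTop (nhds 0)) (hθl : Tendsto θ atTop (nhds 0))
    (hX : Monotone X) (hY : Monotone Y)
    (hu : ∀ k, ∀ j ≤ n, |x j - u k j| ≤ η k / 2)
    (hA : ∀ k, ENNReal.ofReal (∑ j ∈ Finset.range n, |u k (j + 1) - u k j|) ≤ X k)
    (hp : ∀ k, ∀ j ≤ n, |y j - p k j| ≤ θ k / 2)
    (hB : ∀ k, ENNReal.ofReal (∑ j ∈ Finset.range n, |p k (j + 1) - p k j|) ≤ Y k) :
    ENNReal.ofReal |DD n x y| ≤ ∑' j, trm η Θ X Y j := by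
  have hE := E_bound hη hθ hΘ hηl hθl hX hY hu hA hp hB 0
  have e : DD n x y = DD n (u 0) y + DD n (x - u 0) y := by
    rw [← DD_add_left]; congr 1; abel
  have t := tsum_trm_succ (trm η Θ X Y) 0
  simp only [add_zero] at t
  rw [e, t]
  nth_rewrite 1 [trm]
  rw [add_assoc]
  refine (ENNReal.ofReal_le_ofReal (abs_add_le _ _)).trans
    (ENNReal.ofReal_add_le.trans (add_le_add ?_ hE))
  refine (ENNReal.ofReal_le_ofReal (DD_le_left n (u 0) y (Θ 0) hy)).trans ?_
  rw [ENNReal.ofReal_mul hΘ0, pow_zero, one_mul]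
  gcongr
  exact hA 0

end core


/-- regulated on the whole line -/
def RegR (f : ℝ → ℝ) : Prop :=
  ∀ x, (∃ L : ℝ, Tendsto f (nhdsWithin x (Set.Iio x)) (nhds L)) ∧
    (∃ L : ℝ, Tendsto f (nhdsWithin x (Set.Ioi x)) (nhds L))

lemma RegR.osc_right {f : ℝ → ℝ} (hf : RegR f) (x ρ : ℝ) (hρ : 0 < ρ) :
    ∃ κ > 0, ∀ s t, x < s → s < x + κ → x < t → t < x + κ → |f s - f t| < ρ := by
  obtain ⟨L, hL⟩ := (hf x).2
  obtain ⟨κ, hκ, h⟩ := Metric.tendsto_nhdsWithin_nhds.1 hL (ρ / 2) (by positivity)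
  refine ⟨κ, hκ, fun s t h1 h2 h3 h4 => ?_⟩
  have a1 := h (x := s) h1 (by rw [Real.dist_eq, abs_lt]; constructor <;> linarith)
  have a2 := h (x := t) h3 (by rw [Real.dist_eq, abs_lt]; constructor <;> linarith)
  rw [Real.dist_eq, abs_lt] at a1 a2
  rw [abs_lt]; constructor <;> linarith [a1.1, a1.2, a2.1, a2.2]

lemma RegR.osc_left {f : ℝ → ℝ} (hf : RegR f) (x ρ : ℝ) (hρ : 0 < ρ) :
    ∃ κ > 0, ∀ s t, x - κ < s → s < x → x - κ < t → t < x → |f s - f t| < ρ := by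
  obtain ⟨L, hL⟩ := (hf x).1
  obtain ⟨κ, hκ, h⟩ := Metric.tendsto_nhdsWithin_nhds.1 hL (ρ / 2) (by positivity)
  refine ⟨κ, hκ, fun s t h1 h2 h3 h4 => ?_⟩
  have a1 := h (x := s) h2 (by rw [Real.dist_eq, abs_lt]; constructor <;> linarith)
  have a2 := h (x := t) h4 (by rw [Real.dist_eq, abs_lt]; constructor <;> linarith)
  rw [Real.dist_eq, abs_lt] at a1 a2
  rw [abs_lt]; constructor <;> linarith [a1.1, a1.2, a2.1, a2.2]

lemma cont_osc {f : ℝ → ℝ} {x : ℝ} (hf : ContinuousAt f x) (ρ : ℝ) (hρ : 0 < ρ) :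
    ∃ κ > 0, ∀ s t, x - κ < s → s < x + κ → x - κ < t → t < x + κ → |f s - f t| < ρ := by
  obtain ⟨κ, hκ, h⟩ := Metric.continuousAt_iff.1 hf (ρ / 2) (by positivity)
  refine ⟨κ, hκ, fun s t h1 h2 h3 h4 => ?_⟩
  have a1 := h (x := s) (by rw [Real.dist_eq, abs_lt]; constructor <;> linarith)
  have a2 := h (x := t) (by rw [Real.dist_eq, abs_lt]; constructor <;> linarith)
  rw [Real.dist_eq, abs_lt] at a1 a2
  rw [abs_lt]; constructor <;> linarith [a1.1, a1.2, a2.1, a2.2]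

lemma RegR.exists_cont {f : ℝ → ℝ} (hf : RegR f) (p q : ℝ) (hpq : p < q) :
    ∃ x, p < x ∧ x < q ∧ ContinuousAt f x := by
  let U : ℕ → Set ℝ := fun n => {x | ∃ κ > 0, ∀ s t, x - κ < s → s < x + κ → x - κ < t →
    t < x + κ → |f s - f t| < 1 / ((n : ℝ) + 1)}
  have hopen : ∀ n, IsOpen (U n) := by
    intro n
    rw [Metric.isOpen_iff]
    rintro x ⟨κ, hκ, h⟩
    refine ⟨κ / 2, by positivity, ?_⟩
    intro y hy
    rw [Metric.mem_ball, Real.dist_eq, abs_lt] at hy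
    refine ⟨κ / 2, by positivity, fun s t h1 h2 h3 h4 => h s t ?_ ?_ ?_ ?_⟩ <;>
      linarith [hy.1, hy.2]
  have hdense : ∀ n, Dense (U n) := by
    intro n x
    rw [Metric.mem_closure_iff]
    intro ε hε
    obtain ⟨κ, hκ, h⟩ := hf.osc_right x (1 / ((n : ℝ) + 1)) (by positivity)
    have hm : 0 < min κ ε := lt_min hκ hε
    have h1 := min_le_left κ ε
    have h2 := min_le_right κ ε
    refine ⟨x + min κ ε / 2, ⟨min κ ε / 2, by positivity, fun s t _ _ _ _ =>
      h s t ?_ ?_ ?_ ?_⟩, ?_⟩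
    · linarith
    · linarith
    · linarith
    · linarith
    · rw [Real.dist_eq, abs_lt]; constructor <;> linarith
  have hd := dense_iInter_of_isOpen_nat hopen hdense
  obtain ⟨x, hx, hxU⟩ := hd.inter_open_nonempty (Set.Ioo p q) isOpen_Ioo
    (Set.nonempty_Ioo.2 hpq)
  refine ⟨x, hx.1, hx.2, ?_⟩
  rw [Metric.continuousAt_iff]
  intro ε hε
  obtain ⟨n, hn⟩ := exists_nat_one_div_lt hε
  obtain ⟨κ, hκ, h⟩ := Set.mem_iInter.1 hxU n
  refine ⟨κ, hκ, ?_⟩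
  intro y hy
  rw [Real.dist_eq, abs_lt] at hy
  rw [Real.dist_eq]
  exact (h y x (by linarith) (by linarith) (by linarith) (by linarith)).trans hn

/-- Bounded variation on the line -/
def BVb (H : ℝ → ℝ) : Prop :=
  ∃ C : ℝ, ∀ (n : ℕ) (t : ℕ → ℝ), Monotone t →
    ∑ i ∈ Finset.range n, |H (t (i + 1)) - H (t i)| ≤ C

def Good (f : ℝ → ℝ) (a b : ℝ) (H : ℝ → ℝ) : Prop :=
  (∃ I, RSIntegral f H a b I) ∧ BVb H

lemma RS_add_mul {f g h : ℝ → ℝ} {a b I J : ℝ} (c : ℝ) (hg : RSIntegral f g a b I)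
    (hh : RSIntegral f h a b J) : RSIntegral f (fun t => g t + c * h t) a b (I + c * J) := by
  intro ε hε
  obtain ⟨d1, hd1, h1⟩ := hg (ε / 2) (by positivity)
  obtain ⟨d2, hd2, h2⟩ := hh (ε / (2 * (|c| + 1))) (by positivity)
  refine ⟨min d1 d2, lt_min hd1 hd2, ?_⟩
  intro n t ξ ht h0 hl hξ hm
  have b1 := h1 n t ξ ht h0 hl hξ (fun i => (hm i).trans_le (min_le_left _ _))
  have b2 := h2 n t ξ ht h0 hl hξ (fun i => (hm i).trans_le (min_le_right _ _))
  have e : ∑ i : Fin n, f (ξ i) * (g (t i.succ) + c * h (t i.succ) -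
      (g (t i.castSucc) + c * h (t i.castSucc))) - (I + c * J) =
      (∑ i : Fin n, f (ξ i) * (g (t i.succ) - g (t i.castSucc)) - I) +
      c * (∑ i : Fin n, f (ξ i) * (h (t i.succ) - h (t i.castSucc)) - J) := by
    rw [mul_sub, Finset.mul_sum, ← add_sub_add_comm, ← Finset.sum_add_distrib]
    congr 1
    apply Finset.sum_congr rfl
    intro i _; ring
  rw [e]
  refine (abs_add_le _ _).trans_lt ?_
  rw [abs_mul]
  have b3 : |c| * |∑ i : Fin n, f (ξ i) * (h (t i.succ) - h (t i.castSucc)) - J| ≤ ε / 2 := by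
    calc _ ≤ (|c| + 1) * (ε / (2 * (|c| + 1))) := by
          apply mul_le_mul (by linarith) b2.le (abs_nonneg _) (by positivity)
      _ = ε / 2 := by field_simp
  linarith

lemma sum_fin_telescope (n : ℕ) (t : Fin (n + 1) → ℝ) :
    ∑ i : Fin n, (t i.succ - t i.castSucc) = t (Fin.last n) - t 0 := by
  induction n with
  | zero => simp
  | succ n ih =>
    rw [Fin.sum_univ_castSucc]
    have := ih (fun i => t i.castSucc)
    simp only [Fin.succ_castSucc] at *
    rw [this]
    simp

lemma RS_jump {f J : ℝ → ℝ} {z : ℝ} (a b : ℝ) (hf : ContinuousAt f z) (hJ : Monotone J)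
    (h0 : ∀ t < z, J t = 0) (h1 : ∀ t > z, J t = 1) :
    RSIntegral f J a b (f z * (J b - J a)) := by
  have hJ0 : ∀ t, 0 ≤ J t := fun t => by
    have := hJ (min_le_left t (z - 1))
    rwa [h0 _ ((min_le_right t (z - 1)).trans_lt (by linarith))] at this
  have hJ1 : ∀ t, J t ≤ 1 := fun t => by
    have := hJ (le_max_left t (z + 1))
    rwa [h1 _ (lt_of_lt_of_le (by linarith) (le_max_right t (z + 1)))] at this
  intro ε hε
  obtain ⟨δ, hδ, h⟩ := Metric.continuousAt_iff.1 hf (ε / 2) (by positivity)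
  refine ⟨δ, hδ, ?_⟩
  intro n t ξ ht hta htb hξ hm
  have e : f z * (J b - J a) = ∑ i : Fin n, f z * (J (t i.succ) - J (t i.castSucc)) := by
    rw [← Finset.mul_sum, sum_fin_telescope n (fun i => J (t i)), hta, htb]
  rw [e, ← Finset.sum_sub_distrib]
  have b1 : ∀ i : Fin n, |f (ξ i) * (J (t i.succ) - J (t i.castSucc)) -
      f z * (J (t i.succ) - J (t i.castSucc))| ≤
      ε / 2 * (J (t i.succ) - J (t i.castSucc)) := by
    intro i
    have hlt : t i.castSucc < t i.succ := ht Fin.castSucc_lt_succ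
    have hnn : 0 ≤ J (t i.succ) - J (t i.castSucc) := sub_nonneg.2 (hJ hlt.le)
    rw [← sub_mul, abs_mul, abs_of_nonneg hnn]
    by_cases hz : t i.castSucc ≤ z ∧ z ≤ t i.succ
    · apply mul_le_mul_of_nonneg_right _ hnn
      have hξi := hξ i
      have hmi := hm i
      have := h (x := ξ i) (by rw [Real.dist_eq, abs_lt]; constructor <;> linarith [hz.1, hz.2])
      rw [Real.dist_eq] at this
      exact this.le
    · have : J (t i.succ) - J (t i.castSucc) = 0 := by
        rw [not_and_or, not_le, not_le] at hz
        rcases hz with hz | hz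
        · rw [h1 _ hz, h1 _ (hz.trans hlt), sub_self]
        · rw [h0 _ hz, h0 _ (hlt.trans hz), sub_self]
      rw [this]; simp
  calc _ ≤ ∑ i : Fin n, ε / 2 * (J (t i.succ) - J (t i.castSucc)) :=
        (Finset.abs_sum_le_sum_abs _ _).trans (Finset.sum_le_sum fun i _ => b1 i)
    _ = ε / 2 * (J b - J a) := by
        rw [← Finset.mul_sum, sum_fin_telescope n (fun i => J (t i)), hta, htb]
    _ < ε := by nlinarith [hJ0 a, hJ1 b]

lemma Good.add_jump {f g J : ℝ → ℝ} {a b z : ℝ} (c : ℝ) (hg : Good f a b g)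
    (hf : ContinuousAt f z) (hJ : Monotone J)
    (h0 : ∀ t < z, J t = 0) (h1 : ∀ t > z, J t = 1) :
    Good f a b (fun t => g t + c * J t) := by
  obtain ⟨⟨I, hI⟩, C, hC⟩ := hg
  refine ⟨⟨_, RS_add_mul c hI (RS_jump a b hf hJ h0 h1)⟩, C + |c|, ?_⟩
  intro n t ht
  have hJ0 : ∀ t, 0 ≤ J t := fun t => by
    have := hJ (min_le_left t (z - 1))
    rwa [h0 _ ((min_le_right t (z - 1)).trans_lt (by linarith))] at this
  have hJ1 : ∀ t, J t ≤ 1 := fun t => by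
    have := hJ (le_max_left t (z + 1))
    rwa [h1 _ (lt_of_lt_of_le (by linarith) (le_max_right t (z + 1)))] at this
  have hb : ∀ i, |g (t (i + 1)) + c * J (t (i + 1)) - (g (t i) + c * J (t i))| ≤
      |g (t (i + 1)) - g (t i)| + |c| * (J (t (i + 1)) - J (t i)) := by
    intro i
    have : g (t (i + 1)) + c * J (t (i + 1)) - (g (t i) + c * J (t i)) =
      (g (t (i + 1)) - g (t i)) + c * (J (t (i + 1)) - J (t i)) := by ring
    rw [this]
    refine (abs_add_le _ _).trans ?_
    rw [abs_mul, abs_of_nonneg (a := J (t (i + 1)) - J (t i))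
      (sub_nonneg.2 (hJ (ht (Nat.le_succ i))))]
  refine (Finset.sum_le_sum fun i _ => hb i).trans ?_
  rw [Finset.sum_add_distrib, ← Finset.mul_sum, Finset.sum_range_sub (fun i => J (t i))]
  have := hC n t ht
  have h3 : |c| * (J (t n) - J (t 0)) ≤ |c| * 1 :=
    mul_le_mul_of_nonneg_left (by linarith [hJ0 (t 0), hJ1 (t n)]) (abs_nonneg c)
  linarith

lemma exists_step {f g : ℝ → ℝ} (hf : RegR f) (hg : RegR g)
    (hfg : ∀ x, ContinuousAt f x ∨ ContinuousAt g x) (a b ρ : ℝ) (hρ : 0 < ρ) :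
    ∃ φ : ℝ → ℝ, Monotone φ ∧ (∀ t ∈ Set.Icc a b, |g (φ t) - g t| ≤ ρ) ∧
      Good f a b (fun t => g (φ t)) := by
  let G : Set ℝ := {c | a ≤ c ∧ ∃ φ : ℝ → ℝ, Monotone φ ∧ (∀ t, c ≤ t → φ t = c) ∧
    (∀ t ∈ Set.Icc a c, |g (φ t) - g t| ≤ ρ) ∧ Good f a b (fun t => g (φ t))}
  have haG : a ∈ G := by
    refine ⟨le_rfl, fun _ => a, monotone_const, fun _ _ => rfl, ?_, ?_, ?_⟩
    · intro t ht
      have : t = a := le_antisymm ht.2 ht.1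
      rw [this]; simp [hρ.le]
    · refine ⟨0, ?_⟩
      intro ε hε
      exact ⟨1, one_pos, by intros; simpa using hε⟩
    · exact ⟨0, by intros; simp⟩
  have hunb : ¬ BddAbove G := by
    intro hbdd
    have hlub := isLUB_csSup ⟨a, haG⟩ hbdd
    set x := sSup G with hx
    suffices h : ∃ c' ∈ G, x < c' by
      obtain ⟨c', h1, h2⟩ := h
      exact absurd (hlub.1 h1) (not_le.2 h2)
    rcases (hfg x).symm with hc | hc
    · obtain ⟨κ, hκ, hosc⟩ := cont_osc hc ρ hρ
      obtain ⟨c, ⟨hac, φ, hφm, hφc, hφa, hφg⟩, hcx, hcx'⟩ :=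
        hlub.exists_between (show x - κ < x by linarith)
      obtain ⟨c', hc1, hc2, hcont⟩ := hf.exists_cont x (x + κ) (by linarith)
      have hφle : ∀ t, φ t ≤ c := fun t =>
        (hφm (le_max_left t c)).trans (hφc _ (le_max_right t c)).le
      refine ⟨c', ⟨by linarith, fun t => if t < c' then φ t else c', ?_, ?_, ?_, ?_⟩, hc1⟩
      · intro s t hst
        dsimp only
        split_ifs with h1 h2 h2
        · exact hφm hst
        · exact (hφle s).trans (by linarith)
        · linarith
        · exact le_rfl
      · intro t ht
        simp [not_lt.2 ht]
      · intro t ht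
        dsimp only
        split_ifs with h1
        · rcases le_total t c with h2 | h2
          · exact hφa t ⟨ht.1, h2⟩
          · rw [hφc t h2]
            exact (hosc c t hcx (by linarith) (by linarith) (by linarith)).le
        · have : t = c' := le_antisymm ht.2 (not_lt.1 h1)
          rw [this]; simp [hρ.le]
      · have := hφg.add_jump (J := fun t => if t < c' then 0 else 1) (g c' - g c) hcont
          (by
            intro s t hst
            dsimp only
            split_ifs with h1 h2 h2
            · exact le_rfl
            · exact zero_le_one
            · linarith
            · exact le_rfl)
          (by intro t ht; simp [ht]) (by intro t ht; simp [not_lt.2 (le_of_lt ht)])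
        convert this using 2 with t
        by_cases h1 : t < c'
        · simp [h1]
        · have : φ t = c := hφc t (by linarith [not_lt.1 h1])
          simp [h1, this]
    · obtain ⟨κ₁, hκ₁, hosc₁⟩ := hg.osc_left x ρ hρ
      obtain ⟨κ₂, hκ₂, hosc₂⟩ := hg.osc_right x ρ hρ
      obtain ⟨c, ⟨hac, φ, hφm, hφc, hφa, hφg⟩, hcx, hcx'⟩ :=
        hlub.exists_between (show x - κ₁ < x by linarith)
      have hφle : ∀ t, φ t ≤ c := fun t =>
        (hφm (le_max_left t c)).trans (hφc _ (le_max_right t c)).le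
      have hc1 : x < x + κ₂ / 2 := by linarith
      have hc2 : x + κ₂ / 2 < x + κ₂ := by linarith
      set c' := x + κ₂ / 2 with hc'
      refine ⟨c', ⟨by linarith, fun t => if t < x then φ t else if t ≤ x then x else c',
        ?_, ?_, ?_, ?_⟩, hc1⟩
      · intro s t hst
        have := hφle s
        have := hφm hst
        dsimp only
        split_ifs <;> linarith
      · intro t ht
        simp [not_lt.2 (hc1.le.trans ht), not_le.2 (hc1.trans_le ht)]
      · intro t ht
        dsimp only
        split_ifs with h1 h3
        · rcases le_total t c with h2 | h2
          · exact hφa t ⟨ht.1, h2⟩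
          · rw [hφc t h2]
            exact (hosc₁ c t hcx (by linarith) (by linarith) (by linarith)).le
        · have : t = x := le_antisymm h3 (not_lt.1 h1)
          rw [this]; simp [hρ.le]
        · exact (hosc₂ c' t hc1 hc2 (not_le.1 h3) (ht.2.trans_lt hc2)).le
      · have := (hφg.add_jump (J := fun t => if t < x then 0 else 1) (g x - g c) hc
          (by
            intro s t hst
            dsimp only
            split_ifs with h1 h2 h2
            · exact le_rfl
            · exact zero_le_one
            · linarith
            · exact le_rfl)
          (by intro t ht; simp [ht]) (by intro t ht; simp [not_lt.2 (le_of_lt ht)])).add_jump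
          (J := fun t => if t ≤ x then 0 else 1) (g c' - g x) hc
          (by
            intro s t hst
            dsimp only
            split_ifs with h1 h2 h2
            · exact le_rfl
            · exact zero_le_one
            · linarith
            · exact le_rfl)
          (by intro t ht; simp [le_of_lt ht]) (by intro t ht; simp [not_le.2 ht])
        convert this using 2 with t
        by_cases h1 : t < x
        · simp [h1, h1.le]
        · have h2 : φ t = c := hφc t (by linarith [not_lt.1 h1])
          by_cases h3 : t ≤ x
          · simp [h1, h3, h2]
          · simp [h1, h3, h2]
  rw [not_bddAbove_iff] at hunb
  obtain ⟨c, ⟨-, φ, h1, -, h3, h4⟩, hbc⟩ := hunb b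
  exact ⟨φ, h1, fun t ht => h3 t ⟨ht.1, ht.2.trans hbc.le⟩, h4⟩


/-- projection to `[a;b]` -/
noncomputable def pr (a b t : ℝ) : ℝ := max a (min t b)

lemma pr_mem {a b : ℝ} (hab : a ≤ b) (t : ℝ) : pr a b t ∈ Set.Icc a b :=
  ⟨le_max_left _ _, max_le hab (min_le_right _ _)⟩

lemma pr_eq {a b t : ℝ} (ht : t ∈ Set.Icc a b) : pr a b t = t := by
  unfold pr; rw [min_eq_left ht.2, max_eq_right ht.1]

lemma pr_mono (a b : ℝ) : Monotone (pr a b) := fun s t h => by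
  unfold pr; gcongr

lemma pr_cont (a b : ℝ) : Continuous (pr a b) := by
  unfold pr; fun_prop

lemma regR_pr {f : ℝ → ℝ} {a b : ℝ} (hab : a < b) (hf : Regulated f a b) :
    RegR (fun t => f (pr a b t)) := by
  obtain ⟨⟨La, hLa⟩, ⟨Lb, hLb⟩, hin⟩ := hf
  have hlo : ∀ t, t ≤ a → pr a b t = a := fun t ht => by
    unfold pr; rw [min_eq_left (ht.trans hab.le), max_eq_left ht]
  have hhi : ∀ t, b ≤ t → pr a b t = b := fun t ht => by
    unfold pr; rw [min_eq_right ht, max_eq_right hab.le]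
  intro x
  constructor
  · rcases le_or_gt x a with h1 | h1
    · refine ⟨f a, tendsto_const_nhds.congr' ?_⟩
      filter_upwards [self_mem_nhdsWithin] with t ht
      rw [hlo t (le_of_lt (lt_of_lt_of_le ht h1))]
    rcases le_or_gt x b with h2 | h2
    · have key : ∃ L, Tendsto f (nhdsWithin x (Set.Iio x)) (nhds L) := by
        rcases h2.lt_or_eq with h3 | h3
        · exact (hin x ⟨h1, h3⟩).1
        · rw [h3]; exact ⟨Lb, hLb⟩
      obtain ⟨L, hL⟩ := key
      refine ⟨L, hL.congr' ?_⟩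
      filter_upwards [Ioo_mem_nhdsLT h1] with t ht
      rw [pr_eq ⟨ht.1.le, (ht.2.trans_le h2).le⟩]
    · refine ⟨f b, tendsto_const_nhds.congr' ?_⟩
      filter_upwards [Ioo_mem_nhdsLT h2] with t ht
      rw [hhi t ht.1.le]
  · rcases le_or_gt b x with h1 | h1
    · refine ⟨f b, tendsto_const_nhds.congr' ?_⟩
      filter_upwards [self_mem_nhdsWithin] with t ht
      rw [hhi t (le_of_lt (lt_of_le_of_lt h1 ht))]
    rcases le_or_gt a x with h2 | h2
    · have key : ∃ L, Tendsto f (nhdsWithin x (Set.Ioi x)) (nhds L) := by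
        rcases h2.lt_or_eq with h3 | h3
        · exact (hin x ⟨h3, h1⟩).2
        · rw [← h3]; exact ⟨La, hLa⟩
      obtain ⟨L, hL⟩ := key
      refine ⟨L, hL.congr' ?_⟩
      filter_upwards [Ioo_mem_nhdsGT h1] with t ht
      rw [pr_eq ⟨(h2.trans_lt ht.1).le, ht.2.le⟩]
    · refine ⟨f a, tendsto_const_nhds.congr' ?_⟩
      filter_upwards [Ioo_mem_nhdsGT h2] with t ht
      rw [hlo t ht.2.le]

lemma cont_pr {f : ℝ → ℝ} {a b : ℝ} (hab : a ≤ b) (x : ℝ)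
    (h : ContinuousWithinAt f (Set.Icc a b) (pr a b x)) :
    ContinuousAt (fun t => f (pr a b t)) x := by
  have h1 : Tendsto (pr a b) (nhds x) (nhdsWithin (pr a b x) (Set.Icc a b)) :=
    tendsto_nhdsWithin_iff.2 ⟨(pr_cont a b).continuousAt, Eventually.of_forall (pr_mem hab)⟩
  exact h.tendsto.comp h1

/-- extension of a finite sequence -/
def exN {n : ℕ} (t : Fin (n + 1) → ℝ) (i : ℕ) : ℝ := t ⟨min i n, by omega⟩

lemma exN_mono {n : ℕ} {t : Fin (n + 1) → ℝ} (ht : Monotone t) : Monotone (exN t) := by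
  intro i j hij
  apply ht
  rw [Fin.mk_le_mk]; omega

lemma exN_castSucc {n : ℕ} (t : Fin (n + 1) → ℝ) (i : Fin n) : exN t i = t i.castSucc := by
  unfold exN; congr 1; ext; simp <;> omega

lemma exN_succ {n : ℕ} (t : Fin (n + 1) → ℝ) (i : Fin n) : exN t (i + 1) = t i.succ := by
  unfold exN; congr 1; ext; simp <;> omega

lemma exN_zero {n : ℕ} (t : Fin (n + 1) → ℝ) : exN t 0 = t 0 := by
  unfold exN; congr 1 <;> (try ext) <;> simp

lemma exN_last {n : ℕ} (t : Fin (n + 1) → ℝ) : exN t n = t (Fin.last n) := by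
  unfold exN; congr 1 <;> (try ext) <;> simp

/-- extension of tags -/
noncomputable def tgN {n : ℕ} (a b : ℝ) (ξ : Fin n → ℝ) : ℕ → ℝ
  | 0 => a
  | (i + 1) => if h : i < n then ξ ⟨i, h⟩ else b

section part
variable {n : ℕ} {t : Fin (n + 1) → ℝ} {ξ : Fin n → ℝ} {a b : ℝ}

lemma part_mem (ht : StrictMono t) (h0 : t 0 = a) (hl : t (Fin.last n) = b) (i : Fin (n + 1)) :
    t i ∈ Set.Icc a b :=
  ⟨h0 ▸ ht.monotone (Fin.zero_le i), hl ▸ ht.monotone (Fin.le_last i)⟩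

lemma tag_mem (ht : StrictMono t) (h0 : t 0 = a) (hl : t (Fin.last n) = b)
    (hξ : ∀ i : Fin n, t i.castSucc ≤ ξ i ∧ ξ i ≤ t i.succ) (i : Fin n) : ξ i ∈ Set.Icc a b :=
  ⟨(part_mem ht h0 hl _).1.trans (hξ i).1, (hξ i).2.trans (part_mem ht h0 hl _).2⟩

lemma tgN_mem (hab : a ≤ b) (ht : StrictMono t) (h0 : t 0 = a) (hl : t (Fin.last n) = b)
    (hξ : ∀ i : Fin n, t i.castSucc ≤ ξ i ∧ ξ i ≤ t i.succ) (i : ℕ) :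
    tgN a b ξ i ∈ Set.Icc a b := by
  cases i with
  | zero => exact ⟨le_rfl, hab⟩
  | succ i =>
    simp only [tgN]
    split_ifs with h
    · exact tag_mem ht h0 hl hξ _
    · exact ⟨hab, le_rfl⟩

lemma tgN_mono (hab : a ≤ b) (ht : StrictMono t) (h0 : t 0 = a) (hl : t (Fin.last n) = b)
    (hξ : ∀ i : Fin n, t i.castSucc ≤ ξ i ∧ ξ i ≤ t i.succ) : Monotone (tgN a b ξ) := by
  apply monotone_nat_of_le_succ
  intro i
  cases i with
  | zero => exact (tgN_mem hab ht h0 hl hξ 1).1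
  | succ i =>
    by_cases h : i + 1 < n
    · have h' : i < n := by omega
      simp only [tgN, h, h', dif_pos]
      exact (hξ ⟨i, h'⟩).2.trans (hξ ⟨i + 1, h⟩).1
    · have : tgN a b ξ (i + 1 + 1) = b := by simp [tgN, h]
      rw [this]
      exact (tgN_mem hab ht h0 hl hξ _).2

lemma RSsum_eq (f g : ℝ → ℝ) (h0 : t 0 = a) (hl : t (Fin.last n) = b) :
    ∑ i : Fin n, f (ξ i) * (g (t i.succ) - g (t i.castSucc)) =
      DD n (fun i => f (tgN a b ξ i)) (fun i => g (exN t i)) + f a * (g b - g a) := by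
  unfold DD
  have e : f a * (g b - g a) =
      ∑ i ∈ Finset.range n, f a * (g (exN t (i + 1)) - g (exN t i)) := by
    rw [← Finset.mul_sum, Finset.sum_range_sub (fun i => g (exN t i)), exN_last, exN_zero, h0, hl]
  rw [e, ← Finset.sum_add_distrib, ← Fin.sum_univ_eq_sum_range
    (fun i => (f (tgN a b ξ (i + 1)) - f (tgN a b ξ 0)) * (g (exN t (i + 1)) - g (exN t i)) +
      f a * (g (exN t (i + 1)) - g (exN t i)))]
  apply Finset.sum_congr rfl
  intro i _
  have h1 : tgN a b ξ (i + 1) = ξ i := by simp [tgN]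
  have h2 : tgN a b ξ 0 = a := rfl
  rw [h1, h2, exN_succ, exN_castSucc]
  ring
end part

lemma exists_bv {f : ℝ → ℝ} {a b : ℝ} (hab : a < b) (hf : Regulated f a b) (ρ : ℝ)
    (hρ : 0 < ρ) : ∃ H : ℝ → ℝ, BVb H ∧ ∀ t ∈ Set.Icc a b, |H t - f t| ≤ ρ := by
  obtain ⟨φ, -, h1, -, h2⟩ := exists_step (f := fun _ => 0) (g := fun t => f (pr a b t))
    (fun x => ⟨⟨0, tendsto_const_nhds⟩, ⟨0, tendsto_const_nhds⟩⟩) (regR_pr hab hf)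
    (fun x => Or.inl continuousAt_const) a b ρ hρ
  refine ⟨_, h2, fun t ht => ?_⟩
  have := h1 t ht
  rwa [pr_eq ht] at this

lemma truncVar_lt_top {f : ℝ → ℝ} {a b δ : ℝ} (hab : a < b) (hf : Regulated f a b)
    (hδ : 0 < δ) : truncVar f δ a b < ⊤ := by
  obtain ⟨H, ⟨C, hC⟩, hH⟩ := exists_bv hab hf (δ / 2) (by positivity)
  refine lt_of_le_of_lt ?_ (ENNReal.ofReal_lt_top (r := C))
  unfold truncVar
  refine iSup_le fun n => iSup_le fun t => iSup_le fun ht => iSup_le fun hm => ?_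
  calc _ ≤ ∑ i : Fin n, ENNReal.ofReal |H (t i.succ) - H (t i.castSucc)| := by
        apply Finset.sum_le_sum
        intro i _
        apply ENNReal.ofReal_le_ofReal
        have h1 := abs_le.1 (hH _ (hm i.succ))
        have h2 := abs_le.1 (hH _ (hm i.castSucc))
        rw [sub_le_iff_le_add, abs_le]
        have h3 := abs_le.1 (le_refl |H (t i.succ) - H (t i.castSucc)|)
        constructor <;> linarith [h1.1, h1.2, h2.1, h2.2, h3.1, h3.2]
    _ = ENNReal.ofReal (∑ i : Fin n, |H (t i.succ) - H (t i.castSucc)|) :=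
        (ENNReal.ofReal_sum_of_nonneg fun i _ => abs_nonneg _).symm
    _ ≤ _ := by
        apply ENNReal.ofReal_le_ofReal
        refine le_trans (le_of_eq ?_) (hC n (exN t) (exN_mono ht.monotone))
        rw [← Fin.sum_univ_eq_sum_range (fun i => |H (exN t (i + 1)) - H (exN t i)|)]
        apply Finset.sum_congr rfl
        intro i _
        rw [exN_succ, exN_castSucc]

lemma bdd_of_reg {g : ℝ → ℝ} {a b : ℝ} (hab : a < b) (hg : Regulated g a b) :
    ∃ M, ∀ t ∈ Set.Icc a b, |g b - g t| ≤ M := by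
  obtain ⟨H, ⟨C, hC⟩, hH⟩ := exists_bv hab hg 1 one_pos
  refine ⟨C + 2, fun t ht => ?_⟩
  have := hC 1 (fun i => if i = 0 then t else b) (by
    apply monotone_nat_of_le_succ
    intro i
    by_cases hi : i = 0
    · simp [hi, ht.2]
    · simp [hi])
  simp at this
  have h1 := abs_le.1 (hH _ ht)
  have h2 := abs_le.1 (hH b ⟨hab.le, le_rfl⟩)
  have h3 := abs_le.1 this
  rw [abs_le]
  constructor <;> linarith [h1.1, h1.2, h2.1, h2.2, h3.1, h3.2]

lemma exists_part {a b δ : ℝ} (hab : a < b) (hδ : 0 < δ) :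
    ∃ (n : ℕ) (t : Fin (n + 1) → ℝ), StrictMono t ∧ t 0 = a ∧ t (Fin.last n) = b ∧
      ∀ i : Fin n, t i.succ - t i.castSucc < δ := by
  obtain ⟨n, hn⟩ := exists_nat_gt ((b - a) / δ)
  have hba : 0 < b - a := sub_pos.2 hab
  have hn0 : (0 : ℝ) < n := lt_trans (by positivity) hn
  refine ⟨n, fun i => a + (i : ℕ) * ((b - a) / n), ?_, by simp, ?_, ?_⟩
  · intro i j hij
    have h1 : ((i : ℕ) : ℝ) < ((j : ℕ) : ℝ) := by exact_mod_cast hij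
    have h2 : 0 < (b - a) / n := by positivity
    dsimp only
    nlinarith
  · simp only [Fin.val_last]; field_simp; ring
  · intro i
    simp only [Fin.val_succ, Fin.val_castSucc]
    push_cast
    have : (b - a) / n < δ := by
      rw [div_lt_iff₀ hn0]; rw [div_lt_iff₀ hδ] at hn; linarith
    linarith

lemma RS_of_cauchy {f g : ℝ → ℝ} {a b : ℝ} (hab : a < b)
    (h : ∀ ε > (0 : ℝ), ∃ A : ℝ, ∃ δ > (0 : ℝ),
      ∀ (n : ℕ) (t : Fin (n + 1) → ℝ) (ξ : Fin n → ℝ),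
      StrictMono t → t 0 = a → t (Fin.last n) = b →
      (∀ i : Fin n, t i.castSucc ≤ ξ i ∧ ξ i ≤ t i.succ) →
      (∀ i : Fin n, t i.succ - t i.castSucc < δ) →
      |∑ i : Fin n, f (ξ i) * (g (t i.succ) - g (t i.castSucc)) - A| < ε) :
    ∃ I, RSIntegral f g a b I := by
  have hp : ∀ m : ℕ, (0 : ℝ) < 1 / ((m : ℝ) + 1) := fun m => by positivity
  choose A d hd hA using fun m : ℕ => h _ (hp m)
  have hdist : ∀ m k, |A m - A k| ≤ 1 / ((m : ℝ) + 1) + 1 / ((k : ℝ) + 1) := by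
    intro m k
    obtain ⟨n, t, ht, h0, hl, hm⟩ := exists_part hab (lt_min (hd m) (hd k))
    have h1 := hA m n t (fun i => t i.castSucc) ht h0 hl
      (fun i => ⟨le_rfl, (ht Fin.castSucc_lt_succ).le⟩)
      (fun i => (hm i).trans_le (min_le_left _ _))
    have h2 := hA k n t (fun i => t i.castSucc) ht h0 hl
      (fun i => ⟨le_rfl, (ht Fin.castSucc_lt_succ).le⟩)
      (fun i => (hm i).trans_le (min_le_right _ _))
    rw [abs_lt] at h1 h2
    rw [abs_le]
    constructor <;> linarith [h1.1, h1.2, h2.1, h2.2]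
  have hlim0 : Tendsto (fun N : ℕ => 1 / ((N : ℝ) + 1)) atTop (nhds 0) :=
    tendsto_one_div_add_atTop_nhds_zero_nat
  have hc : CauchySeq A := by
    refine cauchySeq_of_le_tendsto_0 (fun N : ℕ => 1 / ((N : ℝ) + 1) + 1 / ((N : ℝ) + 1)) ?_ ?_
    · intro n m N hn hm
      rw [Real.dist_eq]
      refine (hdist n m).trans ?_
      gcongr
    · simpa using hlim0.add hlim0
  obtain ⟨I, hI⟩ := cauchySeq_tendsto_of_complete hc
  refine ⟨I, ?_⟩
  have hAI : ∀ m, |A m - I| ≤ 1 / ((m : ℝ) + 1) := by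
    intro m
    have h1 : Tendsto (fun k => |A m - A k|) atTop (nhds |A m - I|) :=
      (tendsto_const_nhds.sub hI).abs
    have h2 : Tendsto (fun k : ℕ => 1 / ((m : ℝ) + 1) + 1 / ((k : ℝ) + 1)) atTop
        (nhds (1 / ((m : ℝ) + 1) + 0)) := tendsto_const_nhds.add hlim0
    rw [add_zero] at h2
    exact le_of_tendsto_of_tendsto' h1 h2 (hdist m)
  intro ε hε
  obtain ⟨m, hm⟩ := exists_nat_one_div_lt (half_pos hε)
  refine ⟨d m, hd m, ?_⟩
  intro n t ξ ht h0 hl hξ hmesh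
  have h1 := abs_lt.1 (hA m n t ξ ht h0 hl hξ hmesh)
  have h2 := abs_le.1 (hAI m)
  rw [abs_lt]
  constructor <;> linarith [h1.1, h1.2, h2.1, h2.2]

lemma exists_core {f g : ℝ → ℝ} {a b : ℝ} (hab : a < b)
    (hf : Regulated f a b) (hg : Regulated g a b) (hfg : NoCommonDiscont f g a b)
    {η θ Θ : ℕ → ℝ} (hη : ∀ k, 0 ≤ η k) (hθ : ∀ k, 0 ≤ θ k)
    (hηa : Antitone η) (hθa : Antitone θ)
    (hηl : Tendsto η atTop (nhds 0)) (hθl : Tendsto θ atTop (nhds 0))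
    (hΘ : ∀ k, Θ (k + 1) = θ k)
    (hsum : ∑' k, trm η Θ (fun k => truncVar f (η k) a b) (fun k => truncVar g (θ k) a b) k ≠ ⊤)
    (hfin : ∀ k, truncVar f (η k) a b ≠ ⊤) : ∃ I, RSIntegral f g a b I := by
  apply RS_of_cauchy hab
  intro ε hε
  have hX : Monotone (fun k => truncVar f (η k) a b) := fun i j h => truncVar_anti f a b (hηa h)
  have hY : Monotone (fun k => truncVar g (θ k) a b) := fun i j h => truncVar_anti g a b (hθa h)
  set X := fun k => truncVar f (η k) a b with hXd
  set Y := fun k => truncVar g (θ k) a b with hYd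
  have htail := ENNReal.tendsto_sum_nat_add (trm η Θ X Y) hsum
  obtain ⟨K, hK⟩ := (htail.eventually_lt_const
    (show (0 : ENNReal) < ENNReal.ofReal (ε / 8) by simpa using hε)).exists
  have hE0 : ENNReal.ofReal ((2 : ℝ) ^ K * η K) * Y K + ∑' j, trm η Θ X Y (j + (K + 1))
      < ENNReal.ofReal (ε / 8) := by
    refine lt_of_le_of_lt ?_ hK
    rw [tsum_trm_succ (trm η Θ X Y) K]
    have h9 : ENNReal.ofReal ((2 : ℝ) ^ K * η K) * Y K ≤ trm η Θ X Y K := by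
      unfold trm; exact le_add_self
    exact add_le_add h9 le_rfl
  set C := (X K).toReal with hCd
  have hC0 : 0 ≤ C := ENNReal.toReal_nonneg
  set ρ := ε / (8 * (C + |f a| + 1)) with hρd
  have hρ : 0 < ρ := by positivity
  have hρe : ρ * (C + |f a| + 1) = ε / 8 := by rw [hρd]; field_simp
  obtain ⟨φ, hφm, hφ, ⟨A, hA⟩, -⟩ := exists_step (regR_pr hab hf) (regR_pr hab hg)
    (fun x => (hfg _ (pr_mem hab.le x)).imp (cont_pr hab.le x) (cont_pr hab.le x)) a b ρ hρ
  obtain ⟨δ, hδ, hmain⟩ := hA (ε / 4) (by positivity)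
  refine ⟨A, δ, hδ, ?_⟩
  intro n t ξ ht h0 hl hξ hm
  have hI := hmain n t ξ ht h0 hl hξ hm
  have hI' : ∑ i : Fin n, f (pr a b (ξ i)) *
      (g (pr a b (φ (t i.succ))) - g (pr a b (φ (t i.castSucc)))) =
      ∑ i : Fin n, f (ξ i) *
      ((fun s => g (pr a b (φ s))) (t i.succ) - (fun s => g (pr a b (φ s))) (t i.castSucc)) := by
    apply Finset.sum_congr rfl
    intro i _
    rw [pr_eq (tag_mem ht h0 hl hξ i)]
  rw [hI', RSsum_eq f (fun s => g (pr a b (φ s))) h0 hl] at hI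
  rw [RSsum_eq f g h0 hl]
  have hsmono := tgN_mono hab.le ht h0 hl hξ
  have hsmem := tgN_mem hab.le ht h0 hl hξ
  have htmono := exN_mono ht.monotone
  have htmem : ∀ i, exN t i ∈ Set.Icc a b := fun i => part_mem ht h0 hl _
  choose u hu hA using fun k => decomp f (η k) a b (hη k) _ hsmono hsmem n
  choose p hp hB using fun k => decomp g (θ k) a b (hθ k) _ htmono htmem n
  choose p' hp' hB' using fun k => decomp g (θ k) a b (hθ k) (fun i => pr a b (φ (exN t i)))
    (fun i j hij => pr_mono a b (hφm (htmono hij))) (fun i => pr_mem hab.le _) n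
  have E1 := (E_bound (x := fun i => f (tgN a b ξ i)) (y := fun i => g (exN t i))
    hη hθ hΘ hηl hθl hX hY hu hA hp hB K).trans_lt hE0
  have E2 := (E_bound (x := fun i => f (tgN a b ξ i)) (y := fun i => g (pr a b (φ (exN t i))))
    hη hθ hΘ hηl hθl hX hY hu hA hp' hB' K).trans_lt hE0
  have hAK := (ENNReal.ofReal_le_iff_le_toReal (hfin K)).1 (hA K)
  rw [ENNReal.ofReal_lt_ofReal_iff (by positivity)] at E1 E2
  set x : ℕ → ℝ := fun i => f (tgN a b ξ i) with hx
  set y : ℕ → ℝ := fun i => g (exN t i) with hy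
  set z : ℕ → ℝ := fun i => g (pr a b (φ (exN t i))) with hz
  have e1 : DD n x y = DD n (u K) (y - z) + DD n (u K) z + DD n (x - u K) y := by
    rw [← DD_add_right, sub_add_cancel, ← DD_add_left]; congr 1; abel
  have e2 : DD n x z = DD n (u K) z + DD n (x - u K) z := by
    rw [← DD_add_left]; congr 1; abel
  have hyz : ∀ i, |z i - y i| ≤ ρ := by
    intro i
    have := hφ _ (htmem i)
    rwa [pr_eq (htmem i)] at this
  have E3 : |DD n (u K) (y - z)| ≤ 2 * ρ * C := by
    refine (DD_le_left n (u K) (y - z) (2 * ρ) ?_).trans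
      (mul_le_mul_of_nonneg_left hAK (by positivity))
    intro i _
    have a1 := abs_le.1 (hyz n)
    have a2 := abs_le.1 (hyz i)
    simp only [Pi.sub_apply]
    rw [abs_le]; constructor <;> linarith [a1.1, a1.2, a2.1, a2.2]
  have E4 : |f a * (g b - g a) - f a * (g (pr a b (φ b)) - g (pr a b (φ a)))| ≤
      |f a| * (2 * ρ) := by
    rw [← mul_sub, abs_mul]
    apply mul_le_mul_of_nonneg_left _ (abs_nonneg _)
    have a1 := abs_le.1 (hφ a ⟨le_rfl, hab.le⟩)
    have a2 := abs_le.1 (hφ b ⟨hab.le, le_rfl⟩)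
    rw [pr_eq ⟨le_rfl, hab.le⟩] at a1
    rw [pr_eq ⟨hab.le, le_rfl⟩] at a2
    rw [abs_le]; constructor <;> linarith [a1.1, a1.2, a2.1, a2.2]
  rw [e2] at hI
  rw [e1]
  rw [abs_lt] at E1 E2 hI
  rw [abs_le] at E3 E4
  rw [abs_lt]
  constructor <;> nlinarith [E1.1, E1.2, E2.1, E2.2, E3.1, E3.2, E4.1, E4.2, hI.1, hI.2]

lemma exists_final {f g : ℝ → ℝ} {a b : ℝ} (hab : a < b)
    (hf : Regulated f a b) (hg : Regulated g a b) (hfg : NoCommonDiscont f g a b)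
    {η θ Θ : ℕ → ℝ} (hη : ∀ k, 0 ≤ η k) (hθ : ∀ k, 0 ≤ θ k)
    (hηa : Antitone η) (hθa : Antitone θ)
    (hηl : Tendsto η atTop (nhds 0)) (hθl : Tendsto θ atTop (nhds 0))
    (hΘ : ∀ k, Θ (k + 1) = θ k) (hΘ0 : ∀ t ∈ Set.Icc a b, |g b - g t| ≤ Θ 0)
    (hsum : ∑' k, trm η Θ (fun k => truncVar f (η k) a b) (fun k => truncVar g (θ k) a b) k ≠ ⊤) :
    ∃ I, RSIntegral f g a b I := by
  by_cases hF : truncVar f 0 a b = ⊤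
  swap
  · refine exists_core (η := fun _ => 0) (θ := fun _ => 0) (Θ := fun _ => 0) hab hf hg hfg
      (fun _ => le_rfl) (fun _ => le_rfl) antitone_const antitone_const tendsto_const_nhds
      tendsto_const_nhds (fun _ => rfl) ?_ (fun _ => hF)
    simp [trm]
  by_cases hG : truncVar g 0 a b = ⊤
  swap
  · have hl : Tendsto (fun k : ℕ => ((1 : ℝ) / 4) ^ k) atTop (nhds 0) :=
      tendsto_pow_atTop_nhds_zero_of_lt_one (by norm_num) (by norm_num)
    refine exists_core (η := fun k => ((1 : ℝ) / 4) ^ k) (θ := fun _ => 0) (Θ := fun _ => 0)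
      hab hf hg hfg (fun _ => by positivity) (fun _ => le_rfl)
      (fun i j h => pow_le_pow_of_le_one (by norm_num) (by norm_num) h) antitone_const hl
      tendsto_const_nhds (fun _ => rfl) ?_
      (fun _ => (truncVar_lt_top hab hf (by positivity)).ne)
    simp only [trm, mul_zero, ENNReal.ofReal_zero, zero_mul, zero_add]
    rw [ENNReal.tsum_mul_right]
    refine ENNReal.mul_ne_top ?_ hG
    have e : ∀ k : ℕ, (2 : ℝ) ^ k * (1 / 4) ^ k = (1 / 2) ^ k := fun k => by
      rw [← mul_pow]; norm_num
    simp only [e]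
    rw [← ENNReal.ofReal_tsum_of_nonneg (fun k => by positivity)
      (summable_geometric_of_lt_one (by norm_num) (by norm_num))]
    exact ENNReal.ofReal_ne_top
  -- both variations are infinite: all levels are positive
  have hterm : ∀ k, trm η Θ (fun k => truncVar f (η k) a b) (fun k => truncVar g (θ k) a b) k ≠ ⊤ :=
    fun k => ne_top_of_le_ne_top hsum (ENNReal.le_tsum k)
  have hηpos : ∀ k, 0 < Θ k → 0 < η k := by
    intro k hk
    refine lt_of_le_of_ne (hη k) fun h => hterm k ?_
    have : ENNReal.ofReal ((2 : ℝ) ^ k * Θ k) ≠ 0 := by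
      have : 0 < (2 : ℝ) ^ k * Θ k := by positivity
      simpa using this
    simp only [trm, ← h, hF]
    rw [ENNReal.mul_top this]; simp
  have hθpos : ∀ k, 0 < η k → 0 < θ k := by
    intro k hk
    refine lt_of_le_of_ne (hθ k) fun h => hterm k ?_
    have : ENNReal.ofReal ((2 : ℝ) ^ k * η k) ≠ 0 := by
      have : 0 < (2 : ℝ) ^ k * η k := by positivity
      simpa using this
    simp only [trm, ← h, hG]
    rw [ENNReal.mul_top this]; simp
  have hΘ0pos : 0 < Θ 0 := by
    by_contra hneg
    have hconst : ∀ t ∈ Set.Icc a b, g t = g b := fun t ht => by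
      have := (hΘ0 t ht).trans (not_lt.1 hneg)
      have := abs_nonpos_iff.1 this
      linarith
    have : truncVar g 0 a b ≤ 0 := by
      unfold truncVar
      refine iSup_le fun n => iSup_le fun t => iSup_le fun ht => iSup_le fun hm => ?_
      apply le_of_eq
      apply Finset.sum_eq_zero
      intro i _
      rw [hconst _ (hm _), hconst _ (hm _)]; simp
    rw [hG] at this
    simp at this
  have hΘpos : ∀ k, 0 < Θ k := by
    intro k
    induction k with
    | zero => exact hΘ0pos
    | succ k ih => rw [hΘ]; exact hθpos k (hηpos k ih)
  exact exists_core hab hf hg hfg hη hθ hηa hθa hηl hθl hΘ hsum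
    (fun k => (truncVar_lt_top hab hf (hηpos k (hΘpos k))).ne)


/-- Theorem 2 (symmetric version of the main theorem): existence of the
Riemann–Stieltjes integral and the estimate `≤ S̃`. -/
theorem rs_integral_exists_of_truncVar_sum_lt_top'
    (a b : ℝ) (hab : a < b) (f g : ℝ → ℝ)
    (hf : Regulated f a b) (hg : Regulated g a b)
    (hfg : NoCommonDiscont f g a b)
    (η θ : ℕ → ℝ) (hηnn : ∀ k, 0 ≤ η k) (hθnn : ∀ k, 0 ≤ θ k)
    (hηa : Antitone η) (hθa : Antitone θ)
    (hηlim : Tendsto η atTop (nhds 0)) (hθlim : Tendsto θ atTop (nhds 0))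
    (θm1 : ℝ) (hθm1 : θm1 = sSup {x | ∃ t ∈ Set.Icc a b, x = |g b - g t|})
    (S' : ENNReal)
    (hS' : S' = (∑' k : ℕ,
          ENNReal.ofReal ((2 : ℝ) ^ k * (if k = 0 then θm1 else θ (k - 1))) *
            truncVar f (η k) a b)
        + ∑' k : ℕ, ENNReal.ofReal ((2 : ℝ) ^ k * η k) * truncVar g (θ k) a b)
    (hS'fin : S' < ⊤) :
    ∃ I : ℝ, RSIntegral f g a b I ∧
      ENNReal.ofReal |I - f a * (g b - g a)| ≤ S' := by
  set Θ : ℕ → ℝ := fun k => if k = 0 then θm1 else θ (k - 1) with hΘd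
  have hΘ : ∀ k, Θ (k + 1) = θ k := fun k => by simp [hΘd]
  have hΘ0e : Θ 0 = θm1 := by simp [hΘd]
  have hΘ0 : ∀ t ∈ Set.Icc a b, |g b - g t| ≤ Θ 0 := by
    intro t ht
    rw [hΘ0e, hθm1]
    obtain ⟨M, hM⟩ := bdd_of_reg hab hg
    refine le_csSup ⟨M, ?_⟩ ⟨t, ht, rfl⟩
    rintro x ⟨s, hs, rfl⟩
    exact hM s hs
  have hS : S' = ∑' k, trm η Θ (fun k => truncVar f (η k) a b)
      (fun k => truncVar g (θ k) a b) k := by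
    rw [hS', ← ENNReal.tsum_add]
    rfl
  obtain ⟨I, hI⟩ := exists_final hab hf hg hfg hηnn hθnn hηa hθa hηlim hθlim hΘ hΘ0
    (hS ▸ hS'fin.ne)
  refine ⟨I, hI, ?_⟩
  apply ENNReal.ofReal_le_of_le_toReal
  apply le_of_forall_pos_le_add
  intro ε hε
  obtain ⟨δ, hδ, hmain⟩ := hI ε hε
  obtain ⟨n, t, ht, h0, hl, hm⟩ := exists_part hab hδ
  have hξ : ∀ i : Fin n, t i.castSucc ≤ t i.castSucc ∧ t i.castSucc ≤ t i.succ :=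
    fun i => ⟨le_rfl, (ht Fin.castSucc_lt_succ).le⟩
  have h1 := hmain n t (fun i => t i.castSucc) ht h0 hl hξ hm
  rw [RSsum_eq f g h0 hl] at h1
  have hsmono := tgN_mono hab.le ht h0 hl hξ
  have hsmem := tgN_mem hab.le ht h0 hl hξ
  have htmono := exN_mono ht.monotone
  have htmem : ∀ i, exN t i ∈ Set.Icc a b := fun i => part_mem ht h0 hl _
  choose u hu hA using fun k => decomp f (η k) a b (hηnn k) _ hsmono hsmem n
  choose p hp hB using fun k => decomp g (θ k) a b (hθnn k) _ htmono htmem n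
  have h2 := G_bound (x := fun i => f (tgN a b (fun i : Fin n => t i.castSucc) i))
    (y := fun i => g (exN t i)) (Θ := Θ) hηnn hθnn hΘ
    ((abs_nonneg _).trans (hΘ0 a ⟨le_rfl, hab.le⟩))
    (fun i _ => by
      have := hΘ0 _ (htmem i)
      rw [exN_last, hl]; exact this)
    hηlim hθlim
    (X := fun k => truncVar f (η k) a b) (Y := fun k => truncVar g (θ k) a b)
    (fun i j h => truncVar_anti f a b (hηa h)) (fun i j h => truncVar_anti g a b (hθa h))
    hu hA hp hB
  rw [← hS] at h2
  have h3 := (ENNReal.ofReal_le_iff_le_toReal hS'fin.ne).1 h2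
  rw [abs_le] at h3 ⊢
  rw [abs_lt] at h1
  constructor <;> linarith [h1.1, h1.2, h3.1, h3.2]
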